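/- Let X, Y be separable metrizable spaces, Z a topological space, and f : X × Y → Z a separately continuous function whose image f(X × Y) is a discrete subspace of Z. Then there exists a sequence (g_n)_{n∈ℕ} of jointly continuous functions g_n : X × Y → Z such that for every x ∈ X the sequence (g_n(x,·)) converges to f(x,·) uniformly on compact subsets of Y, and for every y ∈ Y the sequence (g_n(·,y)) converges to f(·,y) uniformly on compact subsets of X. -/

import Mathlib

namespace Stmt13Aux

open Set Filter TopologicalSpace

/-- Local step: near any point there is a clopen set on which `f` is constant along the
points `(x, y)` with `y ∈ B` and `f (x, ·)` constant on `B`. -/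
lemma step {X Y D : Type*} [TopologicalSpace X] [TopologicalSpace Y] [TopologicalSpace D]
    [DiscreteTopology D] (f : X → Y → D)
    (hfx : ∀ x, Continuous fun y => f x y) (hfy : ∀ y, Continuous fun x => f x y)
    (B : Set Y) (x : X) (y : Y) :
    ∃ C : Set (X × Y), IsClopen C ∧ (x, y) ∈ C ∧ ∀ p ∈ C, p.2 ∈ B →
      (∀ y₁ ∈ B, ∀ y₂ ∈ B, f p.1 y₁ = f p.1 y₂) → f p.1 p.2 = f x y := by
  have hX : ∀ b : Y, IsClopen {p : X × Y | f p.1 b = f x b} := fun b =>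
    (isClopen_discrete {f x b}).preimage ((hfy b).comp continuous_fst)
  have hY : IsClopen {p : X × Y | f x p.2 = f x y} :=
    (isClopen_discrete {f x y}).preimage ((hfx x).comp continuous_snd)
  by_cases hB : ∀ y₁ ∈ B, ∀ y₂ ∈ B, f x y₁ = f x y₂
  · rcases B.eq_empty_or_nonempty with rfl | ⟨b, hb⟩
    · exact ⟨univ, isClopen_univ, mem_univ _, fun p _ h => absurd h (notMem_empty _)⟩
    · refine ⟨_, (hX b).inter hY, ⟨rfl, rfl⟩, ?_⟩
      rintro p ⟨h1, h2⟩ hp hc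
      exact (hc _ hp _ hb).trans (h1.trans ((hB _ hb _ hp).trans h2))
  · push Not at hB
    obtain ⟨y₁, h₁, y₂, h₂, hne⟩ := hB
    refine ⟨_, (hX y₁).inter (hX y₂), ⟨rfl, rfl⟩, ?_⟩
    rintro p ⟨h1, h2⟩ _ hc
    exact absurd (h1.symm.trans ((hc _ h₁ _ h₂).trans h2)) hne

/-- Gluing: locally (on clopen sets) constant approximations glue in a Lindelof space. -/
lemma glue {W D : Type*} [TopologicalSpace W] [SecondCountableTopology W] [TopologicalSpace D]
    (f : W → D) (S : Set W)
    (h : ∀ w, ∃ C : Set W, IsClopen C ∧ w ∈ C ∧ ∀ p ∈ C, p ∈ S → f p = f w) :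
    ∃ g : W → D, Continuous g ∧ ∀ p ∈ S, g p = f p := by
  classical
  choose C hC hw hf using h
  rcases isEmpty_or_nonempty W with hW | hW
  · exact ⟨f, continuous_of_const fun a => hW.elim a, fun _ _ => rfl⟩
  obtain ⟨s, hs, hsU⟩ := TopologicalSpace.countable_cover_nhds (fun w => (hC w).isOpen.mem_nhds (hw w))
  have hne : s.Nonempty := by
    by_contra hne
    rw [not_nonempty_iff_eq_empty] at hne
    subst hne
    have : hW.some ∈ (⋃ x ∈ (∅ : Set W), C x) := hsU ▸ mem_univ _
    simp at this
  obtain ⟨u, rfl⟩ := hs.exists_eq_range hne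
  have hex : ∀ p, ∃ k, p ∈ C (u k) := fun p => by
    have : p ∈ (⋃ x ∈ range u, C x) := hsU ▸ mem_univ _
    simpa using this
  refine ⟨fun p => f (u (Nat.find (hex p))), ?_, ?_⟩
  · apply IsLocallyConstant.continuous
    rw [IsLocallyConstant.iff_exists_open]
    intro p
    refine ⟨C (u (Nat.find (hex p))) ∩ ⋂ k ∈ Finset.range (Nat.find (hex p)), (C (u k))ᶜ,
      (hC _).isOpen.inter (isOpen_biInter_finset fun k _ => (hC _).compl.isOpen),
      ⟨Nat.find_spec (hex p), ?_⟩, ?_⟩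
    · simp only [mem_iInter, Finset.mem_range]
      exact fun k hk => Nat.find_min (hex p) hk
    · rintro q ⟨h1, h2⟩
      simp only [mem_iInter, Finset.mem_range] at h2
      have : Nat.find (hex q) = Nat.find (hex p) :=
        (Nat.find_eq_iff (hex q)).2 ⟨h1, fun k hk => h2 k hk⟩
      simp only [this]
  · intro p hp
    exact (hf _ p (Nat.find_spec (hex p)) hp).symm

lemma step_all {X Y D : Type*} [TopologicalSpace X] [TopologicalSpace Y] [TopologicalSpace D]
    [DiscreteTopology D] (f : X → Y → D)
    (hfx : ∀ x, Continuous fun y => f x y) (hfy : ∀ y, Continuous fun x => f x y)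
    (B : ℕ → Set Y) (n : ℕ) (x : X) (y : Y) :
    ∃ C : Set (X × Y), IsClopen C ∧ (x, y) ∈ C ∧ ∀ p ∈ C, (∃ k < n, p.2 ∈ B k ∧
      (∀ y₁ ∈ B k, ∀ y₂ ∈ B k, f p.1 y₁ = f p.1 y₂)) → f p.1 p.2 = f x y := by
  choose C hC hw hp using fun k => step f hfx hfy (B k) x y
  refine ⟨⋂ k ∈ Finset.range n, C k, isClopen_biInter_finset fun k _ => hC k, ?_, ?_⟩
  · simp only [mem_iInter]
    exact fun k _ => hw k
  · rintro p h ⟨k, hk, h1, h2⟩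
    simp only [mem_iInter, Finset.mem_range] at h
    exact hp k p (h k hk) h1 h2

lemma exists_seq (Y : Type*) [TopologicalSpace Y] [SecondCountableTopology Y] :
    ∃ B : ℕ → Set Y, (∀ n, IsOpen (B n)) ∧
      ∀ U : Set Y, IsOpen U → ∀ y ∈ U, ∃ n, y ∈ B n ∧ B n ⊆ U := by
  obtain ⟨B, hB⟩ := ((countable_countableBasis Y).insert ∅).exists_eq_range (insert_nonempty _ _)
  refine ⟨B, fun n => ?_, fun U hU y hy => ?_⟩
  · have : B n ∈ insert ∅ (countableBasis Y) := hB ▸ mem_range_self n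
    rcases this with h | h
    · rw [h]; exact isOpen_empty
    · exact isOpen_of_mem_countableBasis h
  · obtain ⟨v, hv, hyv, hvU⟩ := (isBasis_countableBasis Y).exists_subset_of_mem_open hy hU
    have : v ∈ range B := hB ▸ mem_insert_of_mem _ hv
    obtain ⟨n, rfl⟩ := this
    exact ⟨n, hyv, hvU⟩

lemma cover {Y D : Type*} [TopologicalSpace Y] [TopologicalSpace D] [DiscreteTopology D]
    (B : ℕ → Set Y) (hBo : ∀ n, IsOpen (B n))
    (hB : ∀ U : Set Y, IsOpen U → ∀ y ∈ U, ∃ n, y ∈ B n ∧ B n ⊆ U)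
    (h : Y → D) (hc : Continuous h) (K : Set Y) (hK : IsCompact K) :
    ∃ N, ∀ n ≥ N, ∀ y ∈ K, ∃ k < n, y ∈ B k ∧ ∀ y₁ ∈ B k, ∀ y₂ ∈ B k, h y₁ = h y₂ := by
  have : ∀ y, ∃ k, y ∈ B k ∧ B k ⊆ h ⁻¹' {h y} := fun y =>
    hB _ ((isOpen_discrete _).preimage hc) y rfl
  choose k hk hkU using this
  obtain ⟨t, _, ht⟩ := hK.elim_nhds_subcover (fun y => B (k y))
    (fun y _ => (hBo _).mem_nhds (hk y))
  refine ⟨t.sup k + 1, fun n hn y hy => ?_⟩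
  obtain ⟨z, hz, hyz⟩ := mem_iUnion₂.1 (ht hy)
  have hle : k z ≤ t.sup k := Finset.le_sup hz
  exact ⟨k z, by omega, hyz, fun y₁ h₁ y₂ h₂ => (hkU z h₁).trans (hkU z h₂).symm⟩

lemma main {X Y D : Type*} [TopologicalSpace X] [TopologicalSpace Y] [TopologicalSpace D]
    [SecondCountableTopology X] [SecondCountableTopology Y]
    [DiscreteTopology D] (f : X → Y → D)
    (hfx : ∀ x, Continuous fun y => f x y) (hfy : ∀ y, Continuous fun x => f x y) :
    ∃ g : ℕ → X × Y → D, (∀ n, Continuous (g n)) ∧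
      (∀ x, ∀ K : Set Y, IsCompact K → ∃ N, ∀ n ≥ N, ∀ y ∈ K, g n (x, y) = f x y) ∧
      (∀ y, ∀ K : Set X, IsCompact K → ∃ N, ∀ n ≥ N, ∀ x ∈ K, g n (x, y) = f x y) := by
  obtain ⟨B, hBo, hB⟩ := exists_seq Y
  obtain ⟨A, hAo, hA⟩ := exists_seq X
  have key : ∀ n, ∃ g : X × Y → D, Continuous g ∧ ∀ p ∈ {p : X × Y |
      (∃ k < n, p.2 ∈ B k ∧ (∀ y₁ ∈ B k, ∀ y₂ ∈ B k, f p.1 y₁ = f p.1 y₂)) ∨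
      (∃ k < n, p.1 ∈ A k ∧ (∀ x₁ ∈ A k, ∀ x₂ ∈ A k, f x₁ p.2 = f x₂ p.2))},
      g p = f p.1 p.2 := by
    intro n
    refine glue (fun p : X × Y => f p.1 p.2) _ ?_
    rintro ⟨x, y⟩
    obtain ⟨C, hC, hw, hp⟩ := step_all f hfx hfy B n x y
    obtain ⟨C', hC', hw', hp'⟩ := step_all (fun y x => f x y) hfy hfx A n y x
    refine ⟨C ∩ Prod.swap ⁻¹' C', hC.inter (hC'.preimage continuous_swap), ⟨hw, hw'⟩, ?_⟩
    rintro p ⟨h1, h2⟩ (h | h)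
    · exact hp p h1 h
    · exact hp' p.swap h2 h
  choose g hg hgf using key
  refine ⟨g, hg, fun x K hK => ?_, fun y K hK => ?_⟩
  · obtain ⟨N, hN⟩ := cover B hBo hB _ (hfx x) K hK
    exact ⟨N, fun n hn y hy => hgf n (x, y) (Or.inl (hN n hn y hy))⟩
  · obtain ⟨N, hN⟩ := cover A hAo hA _ (hfy y) K hK
    exact ⟨N, fun n hn x hx => hgf n (x, y) (Or.inr (hN n hn x hx))⟩

end Stmt13Aux

theorem stmt13 {X Y Z : Type*} [TopologicalSpace X] [TopologicalSpace Y] [TopologicalSpace Z]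
    [TopologicalSpace.SeparableSpace X] [TopologicalSpace.SeparableSpace Y]
    [TopologicalSpace.MetrizableSpace X] [TopologicalSpace.MetrizableSpace Y]
    (f : X × Y → Z)
    (hfx : ∀ x : X, Continuous fun y : Y => f (x, y))
    (hfy : ∀ y : Y, Continuous fun x : X => f (x, y))
    (hdisc : DiscreteTopology ↥(Set.range f)) :
    ∃ g : ℕ → X × Y → Z, (∀ n, Continuous (g n)) ∧
      (∀ x : X, ∀ K : Set Y, IsCompact K → ∀ U : Set Z, IsOpen U →
        (∀ y ∈ K, f (x, y) ∈ U) →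
        ∀ᶠ n in Filter.atTop, ∀ y ∈ K, g n (x, y) ∈ U) ∧
      (∀ y : Y, ∀ K : Set X, IsCompact K → ∀ U : Set Z, IsOpen U →
        (∀ x ∈ K, f (x, y) ∈ U) →
        ∀ᶠ n in Filter.atTop, ∀ x ∈ K, g n (x, y) ∈ U) := by
  let := TopologicalSpace.metrizableSpaceMetric X
  let := TopologicalSpace.metrizableSpaceMetric Y
  have : SecondCountableTopology X := UniformSpace.secondCountable_of_separable X
  have : SecondCountableTopology Y := UniformSpace.secondCountable_of_separable Y
  obtain ⟨g, hg, h1, h2⟩ := Stmt13Aux.main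
    (fun x y => (⟨f (x, y), Set.mem_range_self _⟩ : Set.range f))
    (fun x => (hfx x).subtype_mk _) (fun y => (hfy y).subtype_mk _)
  refine ⟨fun n p => (g n p : Z), fun n => continuous_subtype_val.comp (hg n), ?_, ?_⟩
  · intro x K hK U _ hU
    obtain ⟨N, hN⟩ := h1 x K hK
    filter_upwards [Filter.eventually_ge_atTop N] with n hn y hy
    rw [hN n hn y hy]
    exact hU y hy
  · intro y K hK U _ hU
    obtain ⟨N, hN⟩ := h2 y K hK
    filter_upwards [Filter.eventually_ge_atTop N] with n hn x hx
    rw [hN n hn x hx]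
    exact hU x hx
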